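/- Assume MA(ω₁) and 2^{ω₁} = ω₂. Then there is a topology on X = ω₂ + 1 which is Fréchet and such that the tightness of the Gδ-modification satisfies t(X_δ) = ω₂. -/

import Mathlib

open Set Filter Topology

universe u v

noncomputable section

/-- The Gδ-modification of a topology: the topology generated by the Gδ subsets. -/
def gdeltaMod {X : Type*} (t : TopologicalSpace X) : TopologicalSpace X :=
  TopologicalSpace.generateFrom {s : Set X | @IsGδ X t s}

/-- `x` is a Fréchet point: whenever `x ∈ cl A` there is a sequence in `A` converging to `x`. -/
def IsFrechetPt {X : Type*} (t : TopologicalSpace X) (x : X) : Prop :=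
  ∀ A : Set X, x ∈ @closure X t A →
    ∃ u : ℕ → X, (∀ n, u n ∈ A) ∧ @Filter.Tendsto ℕ X u Filter.atTop (@nhds X t x)

/-- `x` is an α₁-point: given countably many sequences converging to `x`, there is a single
sequence converging to `x` whose range contains the range of each given one modulo finite. -/
def IsAlpha1Pt {X : Type*} (t : TopologicalSpace X) (x : X) : Prop :=
  ∀ u : ℕ → ℕ → X, (∀ n, @Filter.Tendsto ℕ X (u n) Filter.atTop (@nhds X t x)) →
    ∃ v : ℕ → X, @Filter.Tendsto ℕ X v Filter.atTop (@nhds X t x) ∧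
      ∀ n, (Set.range (u n) \ Set.range v).Finite

/-- A set `B` converges to `x`: every neighborhood of `x` contains all but finitely
many elements of `B`. -/
def SetConverges {X : Type*} (t : TopologicalSpace X) (B : Set X) (x : X) : Prop :=
  ∀ U ∈ @nhds X t x, (B \ U).Finite

/-- Tightness of the space is at most κ. -/
def tightnessLe (X : Type u) (t : TopologicalSpace X) (κ : Cardinal.{u}) : Prop :=
  ∀ (x : X) (A : Set X), x ∈ @closure X t A →
    ∃ B : Set X, B ⊆ A ∧ Cardinal.mk ↥B ≤ κ ∧ x ∈ @closure X t B

/-- The tightness `t(X)`: the least infinite cardinal κ such that whenever `x ∈ cl A`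
there is `B ⊆ A` with `|B| ≤ κ` and `x ∈ cl B`. -/
def tightness (X : Type u) (t : TopologicalSpace X) : Cardinal.{u} :=
  sInf {κ : Cardinal.{u} | Cardinal.aleph0 ≤ κ ∧ tightnessLe X t κ}

/-- The tightness `t(x, X)` of a point. -/
def tightnessPt {X : Type u} (t : TopologicalSpace X) (x : X) : Cardinal.{u} :=
  sInf {κ : Cardinal.{u} | Cardinal.aleph0 ≤ κ ∧
    ∀ A : Set X, x ∈ @closure X t A →
      ∃ B : Set X, B ⊆ A ∧ Cardinal.mk ↥B ≤ κ ∧ x ∈ @closure X t B}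
/-- Martin's Axiom `MA(ω₁)`: for every nonempty ccc partial order `P` (every antichain in the
sense of forcing is countable) and every family of at most `ω₁` dense subsets of `P`, there is
a filter on `P` meeting every member of the family. -/
def MartinsAxiomOmega1 : Prop :=
  ∀ (P : Type u) (_ : PartialOrder P), Nonempty P →
    (∀ A : Set P, (∀ p ∈ A, ∀ q ∈ A, p ≠ q → ¬ ∃ r, r ≤ p ∧ r ≤ q) → A.Countable) →
    ∀ 𝒟 : Set (Set P), Cardinal.mk ↥𝒟 ≤ Cardinal.aleph 1 →
      (∀ D ∈ 𝒟, ∀ p : P, ∃ q ∈ D, q ≤ p) →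
      ∃ G : Set P, G.Nonempty ∧
        (∀ p ∈ G, ∀ q ∈ G, ∃ r ∈ G, r ≤ p ∧ r ≤ q) ∧
        (∀ p ∈ G, ∀ q : P, p ≤ q → q ∈ G) ∧
        ∀ D ∈ 𝒟, (G ∩ D).Nonempty

/-!
Let `p` be a point of a space all of whose other points are isolated, and let the neighbourhoods of
`p` be given by sets `b γ`, each converging to `p`. A set `S` without `p` can be separated from `p`
by a Gδ set if and only if there is one function `f : S → ω` that is finite-to-one on each
`b γ ∩ S`. It therefore suffices to find sets `b γ ⊆ ω₂` for which there is no such `f` on `ω₂`, but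
there is one on every subset of size `ω₁`.

By Shelah's theorem, `2^{ω₁} = ω₂` gives a `♦`-sequence on the points of `ω₂` of cofinality `ω`, and
hence ladders `b γ` such that every unbounded subset of `ω₂` contains an infinite one. Any
`f : ω₂ → ω` is constant on an unbounded set, so it is not finite-to-one on some ladder. A set of
size `ω₁` is bounded in `ω₂`, and only `ω₁` of the ladders have an infinite trace on it. These
traces are almost disjoint, so `MA(ω₁)`, applied to almost disjoint forcing, gives a function that
is finite-to-one on all of them.
-/

/-- `t` is point-countable on `B` if every point lies in `t p` for only countably many `p ∈ B`. For
uncountable `B` this does the work of the disjointness in the conclusion of the Δ-system lemma. -/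
def PointCountableOn {ι E : Type*} (B : Set ι) (t : ι → Finset E) : Prop :=
  ∀ x, {p ∈ B | x ∈ t p}.Countable

namespace PointCountableOn

variable {ι E : Type*} {B C : Set ι} {t : ι → Finset E}

theorem mono (h : PointCountableOn B t) (hCB : C ⊆ B) : PointCountableOn C t :=
  fun x => (h x).mono (inter_subset_inter_left _ hCB)

theorem countable_setOf_exists_mem (h : PointCountableOn B t) {Z : Set E} (hZ : Z.Countable) :
    {p ∈ B | ∃ x ∈ t p, x ∈ Z}.Countable := by
  refine (hZ.biUnion fun x _ => h x).mono ?_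
  rintro p ⟨hp, x, hxp, hxZ⟩
  exact mem_biUnion hxZ ⟨hp, hxp⟩

theorem exists_mem_forall_notMem (h : PointCountableOn B t) (hB : ¬B.Countable) {Z : Set E}
    (hZ : Z.Countable) {Y : Set ι} (hY : Y.Countable) :
    ∃ p ∈ B, p ∉ Y ∧ ∀ x ∈ t p, x ∉ Z := by
  by_contra! hno
  refine hB ((hY.union (h.countable_setOf_exists_mem hZ)).mono fun p hp => ?_)
  by_cases hpY : p ∈ Y
  · exact Or.inl hpY
  · exact Or.inr ⟨hp, hno p hp hpY⟩

theorem exists_seq_pairwise_disjoint (h : PointCountableOn B t) (hB : ¬B.Countable) :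
    ∃ p : ℕ → ι, (∀ n, p n ∈ B) ∧ Pairwise fun m n => Disjoint (t (p m)) (t (p n)) := by
  refine exists_seq_of_forall_finset_exists' (· ∈ B) (fun p q => Disjoint (t p) (t q))
    fun s _ => ?_
  obtain ⟨q, hqB, -, hq⟩ := h.exists_mem_forall_notMem hB
    (s.countable_toSet.biUnion fun p _ => (t p).countable_toSet) countable_empty
  exact ⟨q, hqB, fun p hp => Finset.disjoint_right.2 fun x hxq hxp =>
    hq x hxq (mem_biUnion hp hxp)⟩

end PointCountableOn

theorem exists_pointCountableOn_sdiff_of_card_le {ι E : Type*} [DecidableEq E] {N : ℕ} {S : Set ι}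
    (hS : ¬S.Countable) {g : ι → Finset E} (hg : ∀ p ∈ S, (g p).card ≤ N) :
    ∃ (r : Finset E) (B : Set ι), B ⊆ S ∧ ¬B.Countable ∧ (∀ p ∈ B, r ⊆ g p) ∧
      PointCountableOn B fun p => g p \ r := by
  induction N generalizing S g with
  | zero =>
    refine ⟨∅, S, subset_rfl, hS, by simp, fun x => ?_⟩
    convert! countable_empty (α := ι)
    exact eq_empty_of_forall_notMem fun p ⟨hp, hx⟩ => by
      simp [Finset.card_eq_zero.1 (Nat.le_zero.1 (hg p hp))] at hx
  | succ N ih =>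
    by_cases hpc : PointCountableOn S g
    · exact ⟨∅, S, subset_rfl, hS, by simp, by simpa using hpc⟩
    obtain ⟨x, hx⟩ := not_forall.1 hpc
    obtain ⟨r, B, hBS, hB, hr, hrB⟩ := ih hx (g := fun p => (g p).erase x) fun p hp => by
      have := hg p hp.1
      rw [Finset.card_erase_of_mem hp.2]
      lia
    refine ⟨insert x r, B, fun p hp => (hBS hp).1, hB, fun p hp => Finset.insert_subset
      (hBS hp).2 ((hr p hp).trans (Finset.erase_subset _ _)), ?_⟩
    simpa only [Finset.erase_sdiff_comm, ← Finset.sdiff_insert] using hrB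

/-- A weak form of the Δ-system lemma, with the bound `N` in place of equal cardinalities. -/
theorem exists_pointCountableOn_sdiff {ι E : Type*} [DecidableEq E] {S : Set ι} (hS : ¬S.Countable)
    (g : ι → Finset E) :
    ∃ (r : Finset E) (B : Set ι) (N : ℕ), B ⊆ S ∧ ¬B.Countable ∧ (∀ p ∈ B, (g p).card ≤ N) ∧
      (∀ p ∈ B, r ⊆ g p) ∧ PointCountableOn B fun p => g p \ r := by
  obtain ⟨N, hN⟩ : ∃ N, ¬{p ∈ S | (g p).card ≤ N}.Countable := by
    by_contra! hno
    refine hS ((countable_iUnion hno).mono fun p hp => ?_)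
    exact mem_iUnion.2 ⟨_, hp, le_rfl⟩
  obtain ⟨r, B, hBS, hB, hr, hrB⟩ := exists_pointCountableOn_sdiff_of_card_le hN fun p hp => hp.2
  exact ⟨r, B, N, fun p hp => (hBS hp).1, hB, fun p hp => (hBS hp).2, hr, hrB⟩

/-- A family of sets any two of which, for distinct indices, have finite intersection. -/
def AlmostDisjoint {K Q : Type*} (A : K → Set Q) : Prop :=
  Pairwise fun k l => (A k ∩ A l).Finite

theorem AlmostDisjoint.preimage {K L Q T : Type*} {A : K → Set Q} (hA : AlmostDisjoint A)
    {g : L → K} (hg : Function.Injective g) {j : T → Q} (hj : Function.Injective j) :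
    AlmostDisjoint fun l => j ⁻¹' A (g l) := by
  intro k l hkl
  rw [← preimage_inter]
  exact (hA (hg.ne hkl)).preimage hj.injOn

theorem AlmostDisjoint.finite_setOf_eventually_exists_mem {ι K Q : Type*} {A : K → Set Q}
    (hA : AlmostDisjoint A) {l : Filter ι} [l.NeBot] (hl : l ≤ cofinite) {t : ι → Finset Q}
    (ht : Pairwise fun m n => Disjoint (t m) (t n)) {N : ℕ} (hN : ∀ n, (t n).card ≤ N) :
    {k | ∀ᶠ n in l, ∃ x ∈ t n, x ∈ A k}.Finite := by
  classical
  by_contra hinf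
  obtain ⟨G, hG, hGcard⟩ := Set.Infinite.exists_subset_card_eq hinf (N + 1)
  let D : Set Q := ⋃ k ∈ G, ⋃ l ∈ G.erase k, A k ∩ A l
  have hD : D.Finite := G.finite_toSet.biUnion fun k _ =>
    (G.erase k).finite_toSet.biUnion fun l hl => hA (Finset.ne_of_mem_erase hl).symm
  have hmeetsD : {n | ∃ x ∈ t n, x ∈ D}.Finite := by
    refine (hD.biUnion fun x _ => Subsingleton.finite (s := {n | x ∈ t n}) ?_).subset ?_
    · exact fun m hm n hn => by_contra fun hmn => Finset.disjoint_left.1 (ht hmn) hm hn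
    · rintro n ⟨x, hxn, hxD⟩
      exact mem_biUnion hxD hxn
  obtain ⟨n, hnG, hnD⟩ : ∃ n, (∀ k ∈ G, ∃ x ∈ t n, x ∈ A k) ∧ ¬∃ x ∈ t n, x ∈ D :=
    (((eventually_all_finset G).2 fun k hk => hG hk).and
      (hl hmeetsD.compl_mem_cofinite)).exists
  choose x hxt hxA using hnG
  have hx_inj : Function.Injective fun k : G => (⟨x k k.2, hxt k k.2⟩ : t n) := by
    intro k l hkl
    by_contra hne
    have hkl : x k k.2 = x l l.2 := congrArg Subtype.val hkl
    refine hnD ⟨x k k.2, hxt k k.2, mem_biUnion k.2 (mem_biUnion (Finset.mem_erase.2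
      ⟨fun h => hne (Subtype.ext h.symm), l.2⟩) ⟨hxA k k.2, hkl ▸ hxA l l.2⟩)⟩
  have := (Finset.card_le_card_of_injective hx_inj).trans (hN n)
  lia

/-- A condition of Solovay's almost disjoint forcing for the family `A`: a finite part of the
generic set, together with finitely many `k` such that no further element of `A k` may enter. -/
@[ext]
structure AlmostDisjointCond {K Q : Type*} (A : K → Set Q) where
  /-- The part of the generic set decided so far. -/
  points : Finset Q
  /-- The indices `k` for which no element of `A k` may be added to `points`. -/
  promises : Finset K

namespace AlmostDisjointCond

variable {K Q : Type*} {A : K → Set Q}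

instance : PartialOrder (AlmostDisjointCond A) where
  le q p := p.points ⊆ q.points ∧ p.promises ⊆ q.promises ∧
    ∀ x ∈ q.points, x ∉ p.points → ∀ k ∈ p.promises, x ∉ A k
  le_refl _ := ⟨subset_rfl, subset_rfl, fun _ h h' => absurd h h'⟩
  le_trans r q p hrq hqp := by
    refine ⟨hqp.1.trans hrq.1, hqp.2.1.trans hrq.2.1, fun x hxr hxp k hk => ?_⟩
    by_cases hxq : x ∈ q.points
    · exact hqp.2.2 x hxq hxp k hk
    · exact hrq.2.2 x hxr hxq k (hqp.2.1 hk)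
  le_antisymm _ _ hpq hqp :=
    AlmostDisjointCond.ext (hqp.1.antisymm hpq.1) (hqp.2.1.antisymm hpq.2.1)

theorem exists_mem_of_incompatible [DecidableEq Q] {p q : AlmostDisjointCond A}
    (hpq : ¬∃ s, s ≤ p ∧ s ≤ q) {r : Finset Q} (hp : r ⊆ p.points) (hq : r ⊆ q.points) :
    (∃ k ∈ p.promises, ∃ x ∈ q.points \ r, x ∈ A k) ∨
      ∃ k ∈ q.promises, ∃ x ∈ p.points \ r, x ∈ A k := by
  classical
  contrapose! hpq
  simp only [Finset.mem_sdiff] at hpq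
  refine ⟨⟨p.points ∪ q.points, p.promises ∪ q.promises⟩,
    ⟨Finset.subset_union_left, Finset.subset_union_left, fun x hx hxp k hk => ?_⟩,
    ⟨Finset.subset_union_right, Finset.subset_union_right, fun x hx hxq k hk => ?_⟩⟩
  · exact hpq.1 k hk x ⟨(Finset.mem_union.1 hx).resolve_left hxp, fun hxr => hxp (hp hxr)⟩
  · exact hpq.2 k hk x ⟨(Finset.mem_union.1 hx).resolve_right hxq, fun hxr => hxq (hq hxr)⟩

theorem exists_root [DecidableEq K] [DecidableEq Q] (hA : ∀ k, (A k).Countable)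
    {S : Set (AlmostDisjointCond A)} (hS : ¬S.Countable) :
    ∃ (r : Finset Q) (r' : Finset K) (C : Set (AlmostDisjointCond A)) (N : ℕ),
      C ⊆ S ∧ ¬C.Countable ∧
      (∀ p ∈ C, r ⊆ p.points ∧ (p.points \ r).card ≤ N ∧
        ∀ k ∈ r', ∀ x ∈ p.points \ r, x ∉ A k) ∧
      PointCountableOn C (fun p => p.points \ r) ∧
      PointCountableOn C fun p => p.promises \ r' := by
  obtain ⟨r, B, N, hBS, hB, hN, hr, hpts⟩ := exists_pointCountableOn_sdiff hS points
  obtain ⟨r', C, -, hCB, hC, -, -, hpro⟩ := exists_pointCountableOn_sdiff hB promises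
  have hbad : {p ∈ C | ∃ x ∈ p.points \ r, x ∈ ⋃ k ∈ r', A k}.Countable :=
    (hpts.mono hCB).countable_setOf_exists_mem (r'.countable_toSet.biUnion fun k _ => hA k)
  refine ⟨r, r', C \ {p ∈ C | ∃ x ∈ p.points \ r, x ∈ ⋃ k ∈ r', A k}, N,
    sdiff_subset.trans (hCB.trans hBS), fun h => hC ((h.union hbad).mono ?_), fun p hp => ?_,
    hpts.mono (sdiff_subset.trans hCB), hpro.mono sdiff_subset⟩
  · rw [sdiff_union_self]
    exact subset_union_left
  · exact ⟨hr p (hCB hp.1), (Finset.card_le_card Finset.sdiff_subset).trans (hN p (hCB hp.1)),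
      fun k hk x hx hxk => hp.2 ⟨hp.1, x, hx, mem_biUnion hk hxk⟩⟩

theorem countable_of_pairwise_incompatible (hA : ∀ k, (A k).Countable) (hAD : AlmostDisjoint A)
    {S : Set (AlmostDisjointCond A)}
    (hS : ∀ p ∈ S, ∀ q ∈ S, p ≠ q → ¬∃ r, r ≤ p ∧ r ≤ q) : S.Countable := by
  classical
  by_contra hunc
  obtain ⟨r, r', C, N, hCS, hC, hCr, hpts, hpro⟩ := exists_root hA hunc
  obtain ⟨p, hpC, hpdisj⟩ := hpts.exists_seq_pairwise_disjoint hC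
  let L : Set K := {k | ∀ᶠ n in (hyperfilter ℕ : Filter ℕ), ∃ x ∈ (p n).points \ r, x ∈ A k}
  have hL : L.Finite := hAD.finite_setOf_eventually_exists_mem hyperfilter_le_cofinite hpdisj
    fun n => (hCr _ (hpC n)).2.1
  have hbad_pts : (⋃ n, ⋃ k ∈ (p n).promises, A k).Countable :=
    countable_iUnion fun n => (p n).promises.countable_toSet.biUnion fun k _ => hA k
  obtain ⟨q, hqC, hq, hqL⟩ := hpro.exists_mem_forall_notMem hC hL.countable
    ((countable_range p).union (hpts.countable_setOf_exists_mem hbad_pts))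
  have hmeets : ∀ n, ∃ k ∈ (q.promises \ r' : Finset K), ∃ x ∈ (p n).points \ r, x ∈ A k := by
    intro n
    have hne : p n ≠ q := fun h => hq (Or.inl ⟨n, h⟩)
    rcases exists_mem_of_incompatible (hS _ (hCS (hpC n)) _ (hCS hqC) hne)
      (hCr _ (hpC n)).1 (hCr q hqC).1 with ⟨k, hk, x, hx, hxk⟩ | ⟨k, hk, x, hx, hxk⟩
    · exact absurd (Or.inr ⟨hqC, x, hx, mem_iUnion.2 ⟨n, mem_biUnion hk hxk⟩⟩) hq
    · exact ⟨k, Finset.mem_sdiff.2 ⟨hk, fun hkr => (hCr _ (hpC n)).2.2 k hkr x hx hxk⟩, x, hx, hxk⟩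
  -- The ultrafilter makes one of the finitely many promises of `q` meet almost all the `p n`.
  obtain ⟨k, hk, hkL⟩ := (Ultrafilter.eventually_exists_mem_iff (q.promises \ r').finite_toSet).1
    (Eventually.of_forall hmeets : ∀ᶠ n in (hyperfilter ℕ : Filter ℕ), _)
  exact hqL k hk hkL

end AlmostDisjointCond

/-- `f` takes each value only finitely often on `s`. -/
def FiniteToOneOn {T β : Type*} (f : T → β) (s : Set T) : Prop :=
  ∀ y, (s ∩ f ⁻¹' {y}).Finite

namespace FiniteToOneOn

variable {T X ι : Type*}

theorem of_finite {f : T → ℕ} {s : Set T} (hs : s.Finite) : FiniteToOneOn f s :=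
  fun _ => hs.inter_of_left _

theorem image_iff {j : T → X} (hj : Function.Injective j) {f : X → ℕ} {s : Set T} :
    FiniteToOneOn f (j '' s) ↔ FiniteToOneOn (f ∘ j) s := by
  refine forall_congr' fun n => ?_
  rw [← image_inter_preimage, ← preimage_comp, finite_image_iff hj.injOn]

theorem exists_forall_image_iff {j : T → X} (hj : Function.Injective j) {s : ι → Set T} :
    (∃ f : X → ℕ, ∀ i, FiniteToOneOn f (j '' s i)) ↔ ∃ f : T → ℕ, ∀ i, FiniteToOneOn f (s i) := by
  simp only [image_iff hj]
  refine ⟨fun ⟨f, hf⟩ => ⟨f ∘ j, hf⟩, fun ⟨f, hf⟩ => ⟨Function.extend j f 0, ?_⟩⟩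
  rwa [Function.extend_comp hj]

end FiniteToOneOn

namespace MartinsAxiomOmega1

open scoped Cardinal

theorem exists_finite_inter (hMA : MartinsAxiomOmega1.{u}) {Q K J : Type u} {A : K → Set Q}
    (hA : ∀ k, (A k).Countable) (hAD : AlmostDisjoint A) {D : J → Set Q}
    (hD : ∀ j (G : Finset K), ∃ x ∈ D j, ∀ k ∈ G, x ∉ A k) (hK : #K ≤ ℵ₁) (hJ : #J ≤ ℵ₁) :
    ∃ R : Set Q, (∀ k, (R ∩ A k).Finite) ∧ ∀ j, (R ∩ D j).Nonempty := by
  classical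
  let promising (k : K) : Set (AlmostDisjointCond A) := {p | k ∈ p.promises}
  let hitting (j : J) : Set (AlmostDisjointCond A) := {p | ∃ x ∈ p.points, x ∈ D j}
  have hcard : #↥(range promising ∪ range hitting) ≤ ℵ₁ := (Cardinal.mk_union_le _ _).trans <|
    Cardinal.add_le_of_le (Cardinal.aleph0_le_aleph 1) (Cardinal.mk_range_le.trans hK)
      (Cardinal.mk_range_le.trans hJ)
  have hdense : ∀ E ∈ range promising ∪ range hitting, ∀ p, ∃ q ∈ E, q ≤ p := by
    rintro _ (⟨k, rfl⟩ | ⟨j, rfl⟩) p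
    · exact ⟨⟨p.points, insert k p.promises⟩, Finset.mem_insert_self _ _, subset_rfl,
        Finset.subset_insert _ _, fun x hx hx' => absurd hx hx'⟩
    · obtain ⟨x, hxD, hx⟩ := hD j p.promises
      refine ⟨⟨insert x p.points, p.promises⟩, ⟨x, Finset.mem_insert_self _ _, hxD⟩,
        Finset.subset_insert _ _, subset_rfl, fun y hy hyp => ?_⟩
      rwa [(Finset.mem_insert.1 hy).resolve_right hyp]
  obtain ⟨G, -, hG, -, hGmeets⟩ := hMA (AlmostDisjointCond A) inferInstance ⟨⟨∅, ∅⟩⟩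
    (fun _ => AlmostDisjointCond.countable_of_pairwise_incompatible hA hAD) _ hcard hdense
  refine ⟨⋃ p ∈ G, (p.points : Set Q), fun k => ?_, fun j => ?_⟩
  · obtain ⟨p, hpG, hpk⟩ := hGmeets _ (Or.inl ⟨k, rfl⟩)
    refine p.points.finite_toSet.subset fun x ⟨hx, hxk⟩ => ?_
    obtain ⟨q, hqG, hxq⟩ := mem_iUnion₂.1 hx
    obtain ⟨s, -, hsp, hsq⟩ := hG p hpG q hqG
    exact by_contra fun hxp => hsp.2.2 x (hsq.1 hxq) hxp k hpk hxk
  · obtain ⟨p, hpG, x, hxp, hxD⟩ := hGmeets _ (Or.inr ⟨j, rfl⟩)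
    exact ⟨x, mem_biUnion hpG hxp, hxD⟩

/-- A set meeting every vertical line `{x} × ℕ` of `T × ℕ` and almost disjoint from each
`a i × {n}` contains the graph of the required function. -/
theorem exists_finiteToOneOn (hMA : MartinsAxiomOmega1.{u}) {T I : Type u} {a : I → Set T}
    (ha : ∀ i, (a i).Countable) (haD : AlmostDisjoint a) (hT : #T ≤ ℵ₁) (hI : #I ≤ ℵ₁) :
    ∃ f : T → ℕ, ∀ i, FiniteToOneOn f (a i) := by
  let A (k : I × ULift.{u} ℕ) : Set (T × ℕ) := a k.1 ×ˢ {k.2.down}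
  have hA : ∀ k, (A k).Countable := fun k => (ha k.1).prod (countable_singleton _)
  have hAD : AlmostDisjoint A := by
    rintro ⟨i, ⟨m⟩⟩ ⟨j, ⟨n⟩⟩ hne
    simp only [A, prod_inter_prod]
    by_cases hij : i = j
    · have hmn : m ≠ n := by rintro rfl; exact hne (by rw [hij])
      simp [singleton_inter_eq_empty.2 (show m ∉ ({n} : Set ℕ) from hmn)]
    · exact (haD hij).prod ((finite_singleton m).inter_of_left _)
  have hI' : #(I × ULift.{u} ℕ) ≤ ℵ₁ := by
    rw [Cardinal.mk_prod, Cardinal.lift_id, Cardinal.lift_id]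
    exact Cardinal.mul_le_of_le (Cardinal.aleph0_le_aleph 1) hI (by simp)
  obtain ⟨R, hRA, hRD⟩ := hMA.exists_finite_inter hA hAD
    (D := fun x : T => {x} ×ˢ univ) (fun x G => by
      classical
      obtain ⟨n, hn⟩ := Infinite.exists_notMem_finset (G.image fun k => k.2.down)
      exact ⟨(x, n), by simp, fun k hk hx => hn (Finset.mem_image.2 ⟨k, hk, hx.2.symm⟩)⟩) hI' hT
  have hline : ∀ x, ∃ n, (x, n) ∈ R := by
    intro x
    obtain ⟨⟨y, n⟩, hyR, rfl, -⟩ := hRD x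
    exact ⟨n, hyR⟩
  choose f hf using hline
  refine ⟨f, fun i n => ((hRA (i, ⟨n⟩)).preimage (f := fun x => (x, n))
    (Prod.mk_left_injective n).injOn).subset ?_⟩
  rintro x ⟨hxi, rfl⟩
  exact ⟨hf x, hxi, rfl⟩

end MartinsAxiomOmega1

section Stationary

open Cardinal Order

variable {W : Type u} [LinearOrder W]

theorem exists_forall_lt_of_mk_lt_cof {ι : Type v}
    (hι : Cardinal.lift.{u} #ι < Cardinal.lift.{v} (cof W)) (f : ι → W) : ∃ γ, ∀ i, f i < γ := by
  have hf : ¬IsCofinal (range f) := fun h =>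
    ((Cardinal.lift_le.2 (cof_le h)).trans mk_range_le_lift).not_gt hι
  obtain ⟨γ, hγ⟩ := not_isCofinal_iff.1 hf
  exact ⟨γ, fun i => hγ _ ⟨i, rfl⟩⟩

theorem exists_isLUB_range_of_aleph0_lt_cof [WellFoundedLT W] (hW : ℵ₀ < cof W) (c : ℕ → W) :
    ∃ γ, IsLUB (range c) γ := by
  obtain ⟨γ, hγ⟩ := exists_forall_lt_of_mk_lt_cof (ι := ℕ) (by simpa using hW) c
  have hne : (upperBounds (range c)).Nonempty := ⟨γ, forall_mem_range.2 fun n => (hγ n).le⟩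
  exact ⟨wellFounded_lt.min _ hne, wellFounded_lt.min_mem _ hne,
    fun _ hb => wellFounded_lt.min_le hb⟩

theorem strictMono_iterate_apply {g : W → W} (hg : ∀ x, x < g x) (x : W) :
    StrictMono fun n => g^[n] x :=
  strictMono_nat_of_lt_succ fun n => by simpa only [Function.iterate_succ_apply'] using hg _

/-- `γ` is a limit of an increasing `ω`-sequence, i.e. has cofinality `ω`. -/
def IsOmegaLimit (γ : W) : Prop :=
  ∃ c : ℕ → W, StrictMono c ∧ IsLUB (range c) γ

theorem IsOmegaLimit.cof_Iio_le {γ : W} (hγ : IsOmegaLimit γ) : cof (Iio γ) ≤ ℵ₀ := by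
  obtain ⟨c, hc, hcγ⟩ := hγ
  have hlt : ∀ n, c n < γ := fun n => (hc n.lt_succ_self).trans_le (hcγ.1 ⟨n + 1, rfl⟩)
  have hcof : IsCofinal (range fun n => (⟨c n, hlt n⟩ : Iio γ)) := by
    rintro ⟨α, hα⟩
    obtain ⟨_, ⟨n, rfl⟩, hn⟩ := (lt_isLUB_iff hcγ).1 hα
    exact ⟨_, ⟨n, rfl⟩, hn.le⟩
  exact (cof_le hcof).trans (le_aleph0_iff_set_countable.2 (countable_range _))

variable [WellFoundedLT W]

theorem isStationary_setOf_isOmegaLimit (hW : ℵ₀ < cof W) :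
    IsStationary {γ : W | IsOmegaLimit γ} := by
  intro C hC
  have hnext : ∀ x, ∃ z ∈ C, x < z := by
    intro x
    obtain ⟨y, hxy⟩ := exists_forall_lt_of_mk_lt_cof (ι := Unit)
      (by simpa using one_lt_aleph0.trans hW) fun _ => x
    obtain ⟨z, hzC, hyz⟩ := hC.isCofinal y
    exact ⟨z, hzC, (hxy ()).trans_le hyz⟩
  choose g hgC hg using hnext
  obtain ⟨x⟩ : Nonempty W := cof_ne_zero_iff.1 (aleph0_pos.trans hW).ne'
  obtain ⟨γ, hγ⟩ := exists_isLUB_range_of_aleph0_lt_cof hW fun n => g^[n] (g x)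
  refine ⟨γ, ⟨_, strictMono_iterate_apply hg _, hγ⟩, hC.isLUB_mem ?_ (range_nonempty _) hγ⟩
  rintro _ ⟨n, rfl⟩
  simpa only [← Function.iterate_succ_apply, Function.iterate_succ_apply'] using hgC _

theorem isClub_setOf_forall_lt [IsRegularCardinalOrder W] (hW : ℵ₀ < #W) (F : W → W) :
    IsClub {γ | ∀ α < γ, F α < γ} := by
  refine ⟨fun s hs _ _ γ hγ α hα => ?_, fun x => ?_⟩
  · obtain ⟨β, hβs, hαβ⟩ := (lt_isLUB_iff hγ).1 hα
    exact (hs hβs α hαβ).trans_le (hγ.1 hβs)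
  · have hbound : ∀ y, ∃ z, ∀ α ≤ y, F α < z := by
      intro y
      obtain ⟨z, hz⟩ := exists_forall_lt_of_mk_lt_cof (ι := Iic y)
        (by simpa using mk_Iic_lt y ord_cardinalMk hW.le) fun α => F α
      exact ⟨z, fun α hα => hz ⟨α, hα⟩⟩
    choose g hg using hbound
    obtain ⟨γ, hγ⟩ := exists_isLUB_range_of_aleph0_lt_cof (by simpa using hW) fun n => g^[n] x
    refine ⟨γ, fun α hα => ?_, hγ.1 ⟨0, rfl⟩⟩
    obtain ⟨_, ⟨n, rfl⟩, hn⟩ := (lt_isLUB_iff hγ).1 hα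
    refine (hg _ α hn.le).trans_le (hγ.1 ⟨n + 1, ?_⟩)
    exact Function.iterate_succ_apply' _ _ _

end Stationary

section Diamond

open Cardinal Order
open scoped Ordinal

/-- `Z` is a `♦(S)`-sequence: it guesses every subset of `W` at stationarily many points of `S`. -/
def IsDiamondSeq {W : Type*} [LinearOrder W] (S : Set W) (Z : W → Set W) : Prop :=
  ∀ Y : Set W, IsStationary {γ ∈ S | Y ∩ Iio γ = Z γ}

theorem exists_forall_of_forall_lt_congr {J V : Type*} [LT J] [WellFoundedLT J] [Inhabited V]
    {P : J → (J → V) → V → Prop} (hex : ∀ ζ y, ∃ v, P ζ y v)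
    (hP : ∀ ζ y y' v, (∀ ε < ζ, y ε = y' ε) → P ζ y v → P ζ y' v) : ∃ y, ∀ ζ, P ζ y (y ζ) := by
  classical
  choose G hG using hex
  let extend (ζ : J) (y : ∀ ε, ε < ζ → V) (ε : J) : V := if h : ε < ζ then y ε h else default
  let y : J → V := wellFounded_lt.fix fun ζ y => G ζ (extend ζ y)
  refine ⟨y, fun ζ => hP ζ (extend ζ fun ε _ => y ε) y _ (fun ε hε => dif_pos hε) ?_⟩
  rw [show y ζ = G ζ (extend ζ fun ε _ => y ε) from wellFounded_lt.fix_eq _ _]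
  exact hG _ _

theorem exists_isCofinal_of_cof_lt {T J : Type u} [Preorder T] [LinearOrder J]
    (h : cof T < cof J) {U : J → Set T} (hU : Monotone U) (hcover : ⋃ i, U i = Set.univ) :
    ∃ i, IsCofinal (U i) := by
  obtain ⟨s, hs, hscard⟩ := exists_cof_eq T
  choose ψ hψ using fun x => mem_iUnion.1 (hcover.ge (mem_univ x))
  obtain ⟨i, hi⟩ := exists_forall_lt_of_mk_lt_cof (ι := s) (by simpa [hscard] using h)
    fun x => ψ x
  exact ⟨i, hs.mono fun x hx => hU (hi ⟨x, hx⟩).le (hψ x)⟩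

theorem exists_monotone_iUnion_eq {T J : Type u} [LinearOrder J] [WellFoundedLT J]
    (hJ : ord #J = typeLT J) (hJ₀ : ℵ₀ ≤ #J) {s : Set T} (hs : #s ≤ #J) :
    ∃ U : J → Set T, Monotone U ∧ ⋃ i, U i = s ∧ ∀ i, #(U i) < #J := by
  obtain ⟨φ⟩ := hs
  refine ⟨fun i => (↑) '' {x : s | φ x ≤ i}, fun i j hij => ?_, ?_, fun i => ?_⟩
  · exact image_mono fun x hx => le_trans hx hij
  · rw [← image_iUnion]
    convert! image_univ.trans Subtype.range_val
    exact eq_univ_of_forall fun x => mem_iUnion.2 ⟨φ x, le_rfl⟩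
  · refine mk_image_le.trans_lt (lt_of_le_of_lt ?_ (mk_Iic_lt i hJ hJ₀))
    exact mk_le_of_injective (f := fun x : {x : s | φ x ≤ i} => (⟨φ x, x.2⟩ : Iic i))
      fun x y hxy => Subtype.ext (φ.injective (congrArg Subtype.val hxy))

variable {W J : Type u}

/-- The guess for the `ζ`-th coordinate of a sequence `y` of subsets of `W`. An index `ξ` codes the
sequence `E ξ`, meant to be the restriction of some sequence to the initial segment `Iic (l ξ)`; the
guess collects the `ζ`-th coordinates of those `ξ ∈ U` that are right about `y` before `ζ`. -/
def codedGuess [Preorder W] [LT J] (l : W → W) (E : W → J → Set W) (U : Set W)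
    (y : J → Set W) (ζ : J) : Set W :=
  ⋃ ξ ∈ {ξ ∈ U | ∀ ε < ζ, E ξ ε = y ε ∩ Iic (l ξ)}, E ξ ζ

theorem codedGuess_congr [Preorder W] [LT J] {l : W → W} {E : W → J → Set W} {U : Set W}
    {y y' : J → Set W} {ζ : J} (h : ∀ ε < ζ, y ε = y' ε) :
    codedGuess l E U y ζ = codedGuess l E U y' ζ := by
  have : ∀ ξ, (∀ ε < ζ, E ξ ε = y ε ∩ Iic (l ξ)) ↔ ∀ ε < ζ, E ξ ε = y' ε ∩ Iic (l ξ) :=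
    fun ξ => forall₂_congr fun ε hε => by rw [h ε hε]
  simp only [codedGuess, this]

/-- `y ζ` is a counterexample to the guesses that `y` below `ζ` gives rise to. -/
theorem exists_inter_Iio_ne_codedGuess [LinearOrder W] [LT J] [WellFoundedLT J] {S : Set W}
    (hS : ∀ Z, ¬IsDiamondSeq S Z) (l : W → W) (E : W → J → Set W) (U : W → Set W) :
    ∃ y : J → Set W, ∀ ζ, ∃ C, IsClub C ∧
      ∀ γ ∈ S ∩ C, y ζ ∩ Iio γ ≠ codedGuess l E (U γ) y ζ ∩ Iio γ := by
  refine exists_forall_of_forall_lt_congr (P := fun ζ y Y => ∃ C, IsClub C ∧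
    ∀ γ ∈ S ∩ C, Y ∩ Iio γ ≠ codedGuess l E (U γ) y ζ ∩ Iio γ) (fun ζ y => ?_) fun ζ y y' Y h => ?_
  · obtain ⟨Y, hY⟩ := not_forall.1 (hS fun γ => codedGuess l E (U γ) y ζ ∩ Iio γ)
    obtain ⟨C, hC, hdisj⟩ := not_isStationary_iff.1 hY
    exact ⟨Y, C, hC, fun γ hγ heq => disjoint_left.1 hdisj ⟨hγ.1, heq⟩ hγ.2⟩
  · simp only [codedGuess_congr h, imp_self]

/-- If every guess failed, then for each `ζ` some `ξ ∈ U` would be right before `ζ` and wrong at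
`ζ`; these `ξ` are distinct, and `U` has too few elements for that. -/
theorem exists_codedGuess_inter_Iio_eq [LinearOrder W] [LinearOrder J] {l : W → W}
    {E : W → J → Set W} {U : Set W} (hU : #U < #J) {y : J → Set W} {γ : W}
    (hγ : ∀ α < γ, ∃ ξ ∈ U, α ≤ l ξ ∧ ∀ ε, E ξ ε = y ε ∩ Iic (l ξ)) :
    ∃ ζ, y ζ ∩ Iio γ = codedGuess l E U y ζ ∩ Iio γ := by
  by_contra! hfail
  have hwrong : ∀ ζ, ∃ ξ ∈ U, (∀ ε < ζ, E ξ ε = y ε ∩ Iic (l ξ)) ∧ E ξ ζ ≠ y ζ ∩ Iic (l ξ) := by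
    intro ζ
    by_contra! hright
    refine hfail ζ (Subset.antisymm (fun α ⟨hα, hαγ⟩ => ⟨?_, hαγ⟩) fun α ⟨hα, hαγ⟩ => ⟨?_, hαγ⟩)
    · obtain ⟨ξ, hξU, hαξ, hξ⟩ := hγ α hαγ
      exact mem_biUnion ⟨hξU, fun ε _ => hξ ε⟩ ((hξ ζ).ge ⟨hα, hαξ⟩)
    · obtain ⟨ξ, ⟨hξU, hξ⟩, hαξ⟩ := mem_iUnion₂.1 hα
      exact ((hright ξ hξU hξ).le hαξ).1
  choose ξ hξU hξ_right hξ_wrong using hwrong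
  have hinj : Function.Injective fun ζ => (⟨ξ ζ, hξU ζ⟩ : U) :=
    Function.Injective.of_lt_imp_ne fun ζ ζ' hlt heq => by
      have heq : ξ ζ = ξ ζ' := congrArg Subtype.val heq
      exact hξ_wrong ζ (heq ▸ hξ_right ζ' ζ hlt)
  exact (mk_le_of_injective hinj).not_gt hU

variable [LinearOrder W] [WellFoundedLT W] [IsRegularCardinalOrder W]

theorem exists_code {I : Type u} (hI₀ : ℵ₀ ≤ #I) (hpow : 2 ^ #I = #W) (hW : #W = succ #I) :
    ∃ (l : W → W) (E : W → I → Set W),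
      ∀ α (y : I → Set W), ∃ ξ, l ξ = α ∧ ∀ i, E ξ i = y i ∩ Iic α := by
  have hW₀ : ℵ₀ ≤ #W := hI₀.trans (hW ▸ le_succ _)
  have hIic : ∀ α : W, #(Iic α) ≤ #I := fun α =>
    lt_succ_iff.1 (hW ▸ mk_Iic_lt α ord_cardinalMk hW₀)
  have hcard : #(Σ α : W, I → Set (Iic α)) ≤ #W := by
    rw [mk_sigma]
    refine (sum_le_sum _ (fun _ => #W) fun α => ?_).trans_eq ?_
    · rw [mk_arrow, mk_set, Cardinal.lift_id, Cardinal.lift_id, ← Cardinal.power_mul, ← hpow]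
      exact Cardinal.power_le_power_left two_ne_zero (mul_le_of_le hI₀ (hIic α) le_rfl)
    · rw [sum_const, Cardinal.lift_id, mul_eq_self hW₀]
  obtain ⟨e⟩ := hcard
  obtain ⟨x⟩ : Nonempty W := mk_ne_zero_iff.1 (aleph0_pos.trans_le hW₀).ne'
  have : Nonempty (Σ α : W, I → Set (Iic α)) := ⟨⟨x, fun _ => ∅⟩⟩
  obtain ⟨f, hf⟩ : ∃ f : W → Σ α : W, I → Set (Iic α), Function.Surjective f :=
    ⟨_, Function.invFun_surjective e.injective⟩
  let decode (p : Σ α : W, I → Set (Iic α)) (i : I) : Set W := (↑) '' p.2 i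
  refine ⟨fun ξ => (f ξ).1, fun ξ => decode (f ξ), fun α y => ?_⟩
  obtain ⟨ξ, hξ⟩ := hf ⟨α, fun i => (↑) ⁻¹' y i⟩
  refine ⟨ξ, congrArg Sigma.fst hξ, fun i => ?_⟩
  beta_reduce
  rw [hξ, inter_comm]
  exact Subtype.image_preimage_coe _ _

/-- A case of Shelah's theorem that `2 ^ κ = κ⁺` implies `♦` on `κ⁺`. -/
theorem exists_isDiamondSeq_of_isStationary {κ : Cardinal.{u}} (hκ : ℵ₀ ≤ κ) (hpow : 2 ^ κ = succ κ)
    (hW : #W = succ κ) {S : Set W} (hS : IsStationary S)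
    (hcof : ∀ γ ∈ S, cof (Iio γ) < κ.ord.cof) : ∃ Z, IsDiamondSeq S Z := by
  let J : Type u := κ.ord.ToType
  have hJ : #J = κ := mk_ord_toType κ
  have hJJ : #(J × J) = κ := by rw [mk_prod, Cardinal.lift_id, hJ, mul_eq_self hκ]
  have hW₀ : ℵ₀ < #W := hW ▸ lt_succ_iff.2 hκ
  obtain ⟨l, E, hE⟩ := exists_code (W := W) (I := J × J) (by rwa [hJJ]) (by rw [hJJ, hpow, hW])
    (by rw [hJJ, hW])
  choose U hUmono hUcover hUcard using fun γ : W => exists_monotone_iUnion_eq (J := J)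
    (by simp [J]) (hJ.symm ▸ hκ) (s := Iio γ)
    (hJ.symm ▸ lt_succ_iff.1 (hW ▸ mk_Iio_lt γ ord_cardinalMk))
  by_contra! hfail
  choose y C hC hyC using fun i : J => exists_inter_Iio_ne_codedGuess hfail l
    (fun ξ ε => E ξ (i, ε)) fun γ => U γ i
  choose h hhl hhE using fun α => hE α fun p => y p.1 p.2
  obtain ⟨γ, hγS, hγC, hγh⟩ := hS <| IsClub.inter (by simpa using hW₀.ne')
    (IsClub.iInter (f := fun p : J × J => C p.1 p.2) (by simpa using hW₀.ne')
      (by simp [hJJ, hW]) fun p => hC p.1 p.2) (isClub_setOf_forall_lt hW₀ h)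
  obtain ⟨i, hi⟩ := exists_isCofinal_of_cof_lt (T := Iio γ) (J := J)
    (U := fun i => {α : Iio γ | h α ∈ U γ i}) (by simpa [J] using hcof γ hγS)
    (fun i j hij α hα => hUmono γ hij hα)
    (eq_univ_of_forall fun α => by simpa using (hUcover γ).ge (hγh α α.2))
  obtain ⟨ζ, hζ⟩ := exists_codedGuess_inter_Iio_eq (l := l) (E := fun ξ ε => E ξ (i, ε))
    (hUcard γ i) (y := y i) (γ := γ) fun α hα => by
      obtain ⟨β, hβ, hαβ⟩ := hi ⟨α, hα⟩
      exact ⟨h β, hβ, (hhl β).symm ▸ hαβ, fun ε => by rw [hhE, hhl]⟩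
  exact hyC i ζ γ ⟨hγS, mem_iInter.1 hγC (i, ζ)⟩ hζ

end Diamond

section Ladder

open Cardinal Order

theorem aleph_two_eq_succ_aleph_one : (ℵ_ 2 : Cardinal.{u}) = succ ℵ₁ := by
  rw [succ_aleph, one_add_one_eq_two]

variable {W : Type u} [LinearOrder W]

/-- A ladder at `γ`: a countable set of points below `γ` which is either finite or converges to
`γ`. Finite ladders are allowed so that every point of `W` has one. -/
structure IsLadder (b : Set W) (γ : W) : Prop where
  subset_Iio : b ⊆ Iio γ
  countable : b.Countable
  finite_inter_Iio : ∀ α < γ, (b ∩ Iio α).Finite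

theorem almostDisjoint_of_isLadder {b : W → Set W} (hb : ∀ γ, IsLadder (b γ) γ) :
    AlmostDisjoint b := by
  have : Std.Symm fun γ δ => (b γ ∩ b δ).Finite := ⟨fun γ δ h => by rwa [inter_comm]⟩
  exact Pairwise.of_lt fun γ δ hγδ =>
    ((hb δ).finite_inter_Iio γ hγδ).subset fun _ hx => ⟨hx.2, (hb γ).subset_Iio hx.1⟩

theorem IsOmegaLimit.exists_isLadder {γ : W} (hγ : IsOmegaLimit γ) {Y : Set W}
    (hY : ∀ α < γ, ∃ x ∈ Y, α < x ∧ x < γ) : ∃ b, IsLadder b γ ∧ b ⊆ Y ∧ b.Infinite := by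
  obtain ⟨c, hc, hcγ⟩ := hγ
  have hcγ_lt : ∀ n, c n < γ := fun n => (hc n.lt_succ_self).trans_le (hcγ.1 ⟨n + 1, rfl⟩)
  choose z hzY hcz hzγ using fun n => hY (c n) (hcγ_lt n)
  have hz_finite : ∀ α < γ, {n | z n < α}.Finite := by
    intro α hα
    obtain ⟨_, ⟨N, rfl⟩, hN⟩ := (lt_isLUB_iff hcγ).1 hα
    exact (finite_lt_nat N).subset fun n hn => hc.lt_iff_lt.1 (((hcz n).trans hn).trans hN)
  refine ⟨range z, ⟨range_subset_iff.2 hzγ, countable_range z, fun α hα => ?_⟩,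
    range_subset_iff.2 hzY, fun hfin => ?_⟩
  · refine ((hz_finite α hα).image z).subset ?_
    rintro _ ⟨⟨n, rfl⟩, hn⟩
    exact ⟨n, hn, rfl⟩
  · obtain ⟨_, ⟨m, rfl⟩, hm⟩ := exists_max_image (range z) id hfin (range_nonempty z)
    obtain ⟨_, ⟨n, rfl⟩, hn⟩ := (lt_isLUB_iff hcγ).1 (hzγ m)
    exact (hn.trans (hcz n)).not_ge (hm _ ⟨n, rfl⟩)

variable [WellFoundedLT W] [IsRegularCardinalOrder W]

/-- The conclusion is the principle `♣`. -/
theorem IsDiamondSeq.exists_isLadder {Z : W → Set W} (hW : ℵ₀ < #W)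
    (hZ : IsDiamondSeq {γ : W | IsOmegaLimit γ} Z) :
    ∃ b : W → Set W, (∀ γ, IsLadder (b γ) γ) ∧
      ∀ Y : Set W, ¬BddAbove Y → ∃ γ, b γ ⊆ Y ∧ (b γ).Infinite := by
  have hladder : ∀ γ, ∃ b, IsLadder b γ ∧ (IsOmegaLimit γ →
      (∀ α < γ, ∃ x ∈ Z γ, α < x ∧ x < γ) → b ⊆ Z γ ∧ b.Infinite) := by
    intro γ
    by_cases h : IsOmegaLimit γ ∧ ∀ α < γ, ∃ x ∈ Z γ, α < x ∧ x < γ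
    · obtain ⟨b, hb, hbZ⟩ := h.1.exists_isLadder h.2
      exact ⟨b, hb, fun _ _ => hbZ⟩
    · exact ⟨∅, ⟨empty_subset _, countable_empty, by simp⟩, fun h₁ h₂ => absurd ⟨h₁, h₂⟩ h⟩
  choose b hb hbZ using hladder
  refine ⟨b, hb, fun Y hY => ?_⟩
  choose F hFY hF using not_bddAbove_iff.1 hY
  obtain ⟨γ, ⟨hγ, hγZ⟩, hγF⟩ := hZ Y (isClub_setOf_forall_lt hW F)
  obtain ⟨hsub, hinf⟩ := hbZ γ hγ fun α hα =>
    ⟨F α, hγZ.le ⟨hFY α, hγF α hα⟩, hF α, hγF α hα⟩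
  exact ⟨γ, hsub.trans (hγZ.ge.trans inter_subset_left), hinf⟩

theorem not_exists_forall_finiteToOneOn_of_guessing {b : W → Set W} (hW : ℵ₀ < #W)
    (hb : ∀ Y : Set W, ¬BddAbove Y → ∃ γ, b γ ⊆ Y ∧ (b γ).Infinite) :
    ¬∃ f : W → ℕ, ∀ γ, FiniteToOneOn f (b γ) := by
  rintro ⟨f, hf⟩
  obtain ⟨n, hn⟩ : ∃ n, ¬BddAbove (f ⁻¹' {n}) := by
    by_contra! hbdd
    choose B hB using hbdd
    obtain ⟨γ, hγ⟩ := exists_forall_lt_of_mk_lt_cof (W := W) (by simpa using hW) B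
    exact (hγ (f γ)).not_ge (hB (f γ) rfl)
  obtain ⟨γ, hγn, hγ⟩ := hb _ hn
  exact hγ ((hf γ n).subset fun x hx => ⟨hx, hγn hx⟩)

theorem MartinsAxiomOmega1.exists_finiteToOneOn_inter (hMA : MartinsAxiomOmega1.{u})
    (hW : #W = ℵ_ 2) {b : W → Set W} (hb : ∀ γ, IsLadder (b γ) γ) {A : Set W} (hA : #A ≤ ℵ₁) :
    ∃ f : W → ℕ, ∀ γ, FiniteToOneOn f (b γ ∩ A) := by
  have hA_lt : #A < #W := hW ▸ aleph_two_eq_succ_aleph_one ▸ lt_succ_iff.2 hA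
  obtain ⟨α, hα⟩ := exists_forall_lt_of_mk_lt_cof (W := W) (by simpa using hA_lt)
    fun x : A => (x : W)
  have hIic : #(Iic α) ≤ ℵ₁ := lt_succ_iff.1 <| aleph_two_eq_succ_aleph_one ▸ hW ▸
    mk_Iic_lt α ord_cardinalMk (hW ▸ aleph0_le_aleph 2)
  obtain ⟨f, hf⟩ := (FiniteToOneOn.exists_forall_image_iff Subtype.val_injective).2 <|
    hMA.exists_finiteToOneOn (T := A) (a := fun γ : Iic α => Subtype.val ⁻¹' b γ)
      (fun γ => (hb γ).countable.preimage Subtype.val_injective)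
      ((almostDisjoint_of_isLadder hb).preimage Subtype.val_injective Subtype.val_injective) hA hIic
  refine ⟨f, fun γ => ?_⟩
  rcases le_or_gt γ α with hγα | hαγ
  · rw [inter_comm, ← Subtype.image_preimage_coe]
    exact hf ⟨γ, hγα⟩
  · exact .of_finite (((hb γ).finite_inter_Iio α hαγ).subset
      (inter_subset_inter_right _ fun x hx => hα ⟨x, hx⟩))

theorem isRegularCardinalOrder_toType_ord {c : Cardinal.{u}} (hc : c.IsRegular) :
    IsRegularCardinalOrder c.ord.ToType :=
  ⟨by simp [hc.cof_ord]⟩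

theorem MartinsAxiomOmega1.exists_family_finiteToOneOn_inter (hMA : MartinsAxiomOmega1.{u})
    (hcard : (2 : Cardinal.{u}) ^ (ℵ₁ : Cardinal.{u}) = ℵ_ 2) :
    ∃ (W : Type u) (b : W → Set W), #W = ℵ_ 2 ∧
      (∀ A : Set W, #A ≤ ℵ₁ → ∃ f : W → ℕ, ∀ γ, FiniteToOneOn f (b γ ∩ A)) ∧
      ¬∃ f : W → ℕ, ∀ γ, FiniteToOneOn f (b γ) := by
  let W : Type u := (ℵ_ 2 : Cardinal.{u}).ord.ToType
  have hW : #W = ℵ_ 2 := mk_ord_toType _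
  have hW₀ : ℵ₀ < #W := hW ▸ aleph0_lt_aleph.2 two_pos
  have : IsRegularCardinalOrder W := isRegularCardinalOrder_toType_ord
    (aleph_two_eq_succ_aleph_one ▸ isRegular_succ (aleph0_le_aleph 1))
  obtain ⟨Z, hZ⟩ := exists_isDiamondSeq_of_isStationary (W := W) (aleph0_le_aleph 1)
    (hcard.trans aleph_two_eq_succ_aleph_one) (hW.trans aleph_two_eq_succ_aleph_one)
    (isStationary_setOf_isOmegaLimit (by simpa using hW₀)) fun γ hγ => by
      rw [isRegular_aleph_one.cof_ord]
      exact hγ.cof_Iio_le.trans_lt aleph0_lt_aleph_one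
  obtain ⟨b, hb, hguess⟩ := hZ.exists_isLadder hW₀
  exact ⟨W, b, hW, fun A => hMA.exists_finiteToOneOn_inter hW hb,
    not_exists_forall_finiteToOneOn_of_guessing hW₀ hguess⟩

end Ladder

section StarTopology

open TopologicalSpace

variable {X ι : Type*}

/-- The topology in which all points but `p` are isolated and the neighbourhoods of `p` are the sets
containing `p` and all but finitely many points of each `b i`. -/
abbrev starTopology (p : X) (b : ι → Set X) : TopologicalSpace X where
  IsOpen U := p ∈ U → ∀ i, (b i \ U).Finite
  isOpen_univ := by simp
  isOpen_inter U V hU hV h i := by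
    rw [sdiff_inter]
    exact (hU h.1 i).union (hV h.2 i)
  isOpen_sUnion S hS := by
    rintro ⟨U, hU, hp⟩ i
    exact (hS U hU hp i).subset (sdiff_subset_sdiff_right (subset_sUnion_of_mem hU))

theorem isFrechetPt_starTopology (p : X) (b : ι → Set X) (x : X) :
    IsFrechetPt (starTopology p b) x := by
  let := starTopology p b
  intro A hA
  change x ∈ closure A at hA
  by_cases hxA : x ∈ A
  · exact ⟨fun _ => x, fun _ => hxA, tendsto_const_nhds⟩
  have hnot_open : ¬(p ∉ A → ∀ i, (b i ∩ A).Finite) := fun h => by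
    have hclosed : IsOpen Aᶜ := fun hp => by simpa only [sdiff_compl] using h hp
    exact hxA ((isOpen_compl_iff.1 hclosed).closure_subset hA)
  push Not at hnot_open
  obtain ⟨hpA, i, hi⟩ := hnot_open
  obtain rfl : x = p := by
    by_contra hxp
    have hopen : IsOpen {x} := fun hp => absurd hp.symm hxp
    obtain ⟨y, rfl, hyA⟩ := mem_closure_iff.1 hA {x} hopen rfl
    exact hxA hyA
  refine ⟨fun n => hi.natEmbedding _ n, fun n => (hi.natEmbedding _ n).2.2, ?_⟩
  refine tendsto_nhds.2 fun U hU hxU => ?_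
  rw [← Nat.cofinite_eq_atTop, mem_cofinite]
  refine ((hU hxU i).preimage
    (Subtype.val_injective.comp (hi.natEmbedding _).injective).injOn).subset fun n hn => ?_
  exact ⟨(hi.natEmbedding _ n).2.1, hn⟩

theorem isTopologicalBasis_isGδ (t : TopologicalSpace X) :
    @IsTopologicalBasis X (gdeltaMod t) {s | @IsGδ X t s} := by
  let := gdeltaMod t
  exact isTopologicalBasis_of_subbasis_of_finiteInter rfl
    ⟨@IsGδ.univ X t, fun s hs s' hs' => @IsGδ.inter X t s s' hs hs'⟩

theorem mem_closure_gdeltaMod_iff {t : TopologicalSpace X} {x : X} {S : Set X} :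
    x ∈ closure[gdeltaMod t] S ↔
      ∀ U : ℕ → Set X, (∀ n, IsOpen (U n)) → (∀ n, x ∈ U n) → ∃ y ∈ S, ∀ n, y ∈ U n := by
  rw [@IsTopologicalBasis.mem_closure_iff X (gdeltaMod t) _ (isTopologicalBasis_isGδ t)]
  refine ⟨fun h U hU hxU => ?_, fun h G hG hxG => ?_⟩
  · obtain ⟨y, hyU, hyS⟩ := h _ (IsGδ.iInter_of_isOpen hU) (mem_iInter.2 hxU)
    exact ⟨y, hyS, mem_iInter.1 hyU⟩
  · obtain ⟨U, hU, rfl⟩ := isGδ_iff_eq_iInter_nat.1 hG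
    obtain ⟨y, hyS, hyU⟩ := h U hU (mem_iInter.1 hxG)
    exact ⟨y, mem_iInter.2 hyU, hyS⟩

theorem notMem_closure_gdeltaMod_starTopology_iff {p : X} {b : ι → Set X} {S : Set X}
    (hp : p ∉ S) :
    p ∉ closure[gdeltaMod (starTopology p b)] S ↔
      ∃ f : X → ℕ, ∀ i, FiniteToOneOn f (b i ∩ S) := by
  rw [mem_closure_gdeltaMod_iff]
  push Not
  constructor
  · rintro ⟨U, hU, hpU, hUS⟩
    have hS : ∀ x, ∃ n, x ∈ S → x ∉ U n := by
      intro x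
      by_cases hx : x ∈ S
      · exact (hUS x hx).imp fun n hn _ => hn
      · exact ⟨0, fun h => absurd h hx⟩
    choose f hf using hS
    refine ⟨f, fun i n => (hU n (hpU n) i).subset ?_⟩
    rintro x ⟨⟨hxi, hxS⟩, rfl⟩
    exact ⟨hxi, hf x hxS⟩
  · rintro ⟨f, hf⟩
    refine ⟨fun n => (S ∩ f ⁻¹' {n})ᶜ, fun n _ i => ?_, fun n h => hp h.1,
      fun x hx => ⟨f x, not_not.2 ⟨hx, rfl⟩⟩⟩
    rw [Set.sdiff_compl, ← inter_assoc]
    exact hf i n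

end StarTopology

section Tightness

open Cardinal

theorem tightness_eq_mk {X : Type u} {t : TopologicalSpace X} (hX : ℵ₀ ≤ #X) {x : X} {A : Set X}
    (hx : x ∈ closure A) (h : ∀ B ⊆ A, #B < #X → x ∉ closure B) : tightness X t = #X := by
  have hmem : tightnessLe X t #X := fun x A hA => ⟨A, subset_rfl, mk_set_le A, hA⟩
  refine le_antisymm (csInf_le' ⟨hX, hmem⟩) (le_csInf ⟨_, hX, hmem⟩ ?_)
  rintro κ ⟨-, hκ⟩
  obtain ⟨B, hBA, hBκ, hxB⟩ := hκ x A hx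
  exact (not_lt.1 fun hlt => h B hBA hlt hxB).trans hBκ

theorem tightness_gdeltaMod_starTopology {X : Type u} (hX : ℵ₀ ≤ #X) {ι : Type*} {p : X}
    {b : ι → Set X} {A : Set X} (hp : p ∉ A) (hA : ¬∃ f : X → ℕ, ∀ i, FiniteToOneOn f (b i ∩ A))
    (hB : ∀ B ⊆ A, #B < #X → ∃ f : X → ℕ, ∀ i, FiniteToOneOn f (b i ∩ B)) :
    tightness X (gdeltaMod (starTopology p b)) = #X :=
  @tightness_eq_mk X (gdeltaMod (starTopology p b)) hX p A
    (not_not.1 ((notMem_closure_gdeltaMod_starTopology_iff hp).not.2 hA)) fun B hBA hBX =>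
      (notMem_closure_gdeltaMod_starTopology_iff (notMem_subset hBA hp)).2 (hB B hBA hBX)

theorem mk_subtype_ordinal_le (o : Ordinal.{u}) :
    #{β : Ordinal.{u} // β ≤ o} = Cardinal.lift.{u + 1} (o + 1).card := by
  rw [← mk_Iio_ordinal, ← Order.succ_eq_add_one, Order.Iio_succ]
  rfl

theorem statement10_general (hMA : MartinsAxiomOmega1.{u})
    (hcard : (2 : Cardinal.{u}) ^ (ℵ₁ : Cardinal.{u}) = ℵ_ 2) {X : Type v} (hX : #X = ℵ_ 2) :
    ∃ t : TopologicalSpace X, (∀ x, IsFrechetPt t x) ∧ tightness X (gdeltaMod t) = ℵ_ 2 := by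
  obtain ⟨W, b, hW, hsmall, hall⟩ := hMA.exists_family_finiteToOneOn_inter hcard
  obtain ⟨e⟩ : Nonempty (Option W ↪ X) := lift_mk_le'.1 (by simp [hX, hW])
  let j : W → X := e ∘ some
  have hj : Function.Injective j := e.injective.comp (Option.some_injective W)
  refine ⟨starTopology (e none) fun γ => j '' b γ, isFrechetPt_starTopology _ _, ?_⟩
  rw [← hX]
  refine tightness_gdeltaMod_starTopology (hX ▸ aleph0_le_aleph 2) (A := range j) ?_ ?_
    fun B _ hB => ?_
  · rintro ⟨w, hw⟩
    exact Option.some_ne_none w (e.injective hw)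
  · simp only [inter_eq_left.2 (image_subset_range _ _)]
    rwa [FiniteToOneOn.exists_forall_image_iff hj]
  · simp only [← image_inter_preimage]
    refine (FiniteToOneOn.exists_forall_image_iff hj).2 (hsmall _ ?_)
    have hB : #B ≤ ℵ₁ := Order.lt_succ_iff.1 (aleph_two_eq_succ_aleph_one ▸ hX ▸ hB)
    have := (mk_preimage_of_injective_lift j B hj).trans (lift_le.2 hB)
    simpa using this

end Tightness

/-- `MA(ω₁)` together with `2^{ω₁} = ω₂` implies that there is a Fréchet
topology on `ω₂ + 1` whose Gδ-modification has tightness `ω₂`. -/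
theorem statement10 (hMA : MartinsAxiomOmega1.{u})
    (hcard : (2 : Cardinal.{u}) ^ (Cardinal.aleph 1) = Cardinal.aleph 2) :
    ∃ t : TopologicalSpace {β : Ordinal.{u} // β ≤ (Cardinal.aleph 2).ord},
      (∀ x : {β : Ordinal.{u} // β ≤ (Cardinal.aleph 2).ord}, IsFrechetPt t x) ∧
      tightness {β : Ordinal.{u} // β ≤ (Cardinal.aleph 2).ord} (gdeltaMod t) =
        Cardinal.aleph 2 :=
  statement10_general hMA hcard <| by simp [mk_subtype_ordinal_le]
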